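/- The set Sk of sketches over (Σ, ⟨·⟩, Λ), with the operations ⊓ and ⊔ defined on languages and labelings as given, forms a lattice: ⊓ and ⊔ are well-defined on sketches (in particular they preserve nonemptiness, prefix-closedness and regularity of the languages and the regular-fiber condition on the labelings) and satisfy the lattice axioms for the order X ⊴ Y defined by X ⊓ Y = X. Moreover Sk has a top element, the sketch with language {ε} and single node labeled ⊤ ∈ Λ; and if Σ is finite, Sk has a bottom element, the sketch with language Σ* and labeling ν(w) = ⊥ when ⟨w⟩ = ⊕ and ν(w) = ⊤ when ⟨w⟩ = ⊖. -/

import Mathlib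

open scoped Classical

/-- The two-element sign monoid `{⊕, ⊖}` of variances. -/
inductive Sign : Type where
  | pos
  | neg
deriving DecidableEq, Repr

/-- Multiplication in the sign monoid (`⊕` is the identity, `⊖ · ⊖ = ⊕`). -/
def Sign.mul : Sign → Sign → Sign
  | .pos, s => s
  | .neg, .pos => .neg
  | .neg, .neg => .pos

/-- Variance of a word in `Σ*`: `⟨ε⟩ = ⊕`, `⟨xw⟩ = ⟨x⟩·⟨w⟩`. -/
def wordSign {L : Type} (sgn : L → Sign) : List L → Sign
  | [] => .pos
  | x :: w => (sgn x).mul (wordSign sgn w)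

/-- A sketch over `(Σ, Λ)`: a regular tree with edges labeled by elements of
`Σ` and nodes marked with elements of `Λ`, having only finitely many subtrees
up to labeled isomorphism.  Equivalently (and as represented here), a
deterministic finite-state automaton, all of whose states are accepting, with
partial transition function and each state labeled by an element of `Λ`.  Its
language is automatically a nonempty prefix-closed regular language and the
fibers of its labeling are automatically regular. -/
structure Sketch (L Λ : Type) : Type 1 where
  State : Type
  finite : Finite State
  init : State
  step : State → L → Option State
  lab : State → Λ

/-- The (partial) run of a sketch automaton on a word. -/
def Sketch.run {L Λ : Type} (S : Sketch L Λ) (w : List L) : Option S.State :=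
  List.foldlM S.step S.init w

/-- The node marking of a sketch, as a partial function on words:
`S.node w = some λ` iff `w ∈ ℒ(S)` and the node of `S` reached by following
`w` from the root is marked `λ`; `S.node w = none` iff `w ∉ ℒ(S)`. -/
def Sketch.node {L Λ : Type} (S : Sketch L Λ) (w : List L) : Option Λ :=
  (S.run w).map S.lab

/-- The language `ℒ(S) ⊆ Σ*` of a sketch. -/
def Sketch.lang {L Λ : Type} (S : Sketch L Λ) : Set (List L) :=
  {w | S.node w ≠ none}

/-- Two sketches are equal as sketches (i.e., as `Λ`-labeled regular trees)
when they have the same language and the same node markings. -/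
def Sketch.Equiv {L Λ : Type} (X Y : Sketch L Λ) : Prop :=
  ∀ w : List L, X.node w = Y.node w

/-!
A sketch is determined by its marking `List L → Option Λ`, and a function of this type is a marking
exactly when it is defined at the root, undefined below every word where it is undefined, and has
finitely many left quotients (subtrees). With `none` as an added top element, the prescribed `⊓` and
`⊔` are the operations of `WithTop Λ` at covariant words and of `WithTop Λᵒᵈ` at contravariant ones,
so markings lie in a product of lattices. The three conditions are preserved by the operations of
this product: the left quotient of the result by `u` depends only on the variance of `u` and on the
left quotients of the two arguments by `u`. The lattice axioms are inherited from the product.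
-/

section LeftQuotients

variable {α β γ δ σ : Type*}

/-- The left quotient of a function on words by the word `u`; for the marking of a sketch, the
subtree at the node `u`. -/
def leftQuotient (f : List α → β) (u : List α) : List α → β :=
  fun v => f (u ++ v)

theorem leftQuotient_leftQuotient (f : List α → β) (u v : List α) :
    leftQuotient (leftQuotient f u) v = leftQuotient f (u ++ v) :=
  funext fun w => congrArg f (List.append_assoc u v w).symm

/-- The Myhill–Nerode form of regularity for functions on words, saying of the marking of a sketch
that the tree has finitely many subtrees. -/
def HasFiniteLeftQuotients (f : List α → β) : Prop :=
  (Set.range (leftQuotient f)).Finite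

namespace HasFiniteLeftQuotients

theorem of_factor {f : List α → β} [Finite σ] (state : List α → σ) (behavior : σ → List α → β)
    (h : ∀ u v, f (u ++ v) = behavior (state u) v) : HasFiniteLeftQuotients f :=
  (Set.finite_range behavior).subset <|
    Set.range_subset_iff.2 fun u => ⟨state u, funext fun v => (h u v).symm⟩

theorem map₂ {f : List α → β} {g : List α → γ} (k : β → γ → δ) (hf : HasFiniteLeftQuotients f)
    (hg : HasFiniteLeftQuotients g) : HasFiniteLeftQuotients fun w => k (f w) (g w) :=
  (Set.Finite.image2 (fun a b v => k (a v) (b v)) hf hg).subset <|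
    Set.range_subset_iff.2 fun u => ⟨_, Set.mem_range_self u, _, Set.mem_range_self u, rfl⟩

end HasFiniteLeftQuotients

end LeftQuotients

section Variance

instance : Fintype Sign :=
  ⟨{.pos, .neg}, fun s => by cases s <;> simp⟩

protected theorem Sign.mul_assoc (s t u : Sign) : (s.mul t).mul u = s.mul (t.mul u) := by
  cases s <;> cases t <;> cases u <;> rfl

protected theorem Sign.mul_pos (s : Sign) : s.mul .pos = s := by
  cases s <;> rfl

variable {L : Type} (sgn : L → Sign)

theorem wordSign_append (u v : List L) :
    wordSign sgn (u ++ v) = (wordSign sgn u).mul (wordSign sgn v) := by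
  induction u with
  | nil => rfl
  | cons x u ih => rw [List.cons_append, wordSign, wordSign, ih, Sign.mul_assoc]

theorem hasFiniteLeftQuotients_wordSign : HasFiniteLeftQuotients (wordSign sgn) :=
  .of_factor (wordSign sgn) (fun s v => s.mul (wordSign sgn v)) (wordSign_append sgn)

end Variance

section Labels

variable {Λ : Type*} [Lattice Λ]

/-- The prescribed label of `X ⊓ Y` at a word of variance `s`, from the labels of `X` and `Y`
there; `none` says that the word is not in the language. -/
def meetLabel (s : Sign) : Option Λ → Option Λ → Option Λ :=
  Option.merge fun a b => if s = .pos then a ⊓ b else a ⊔ b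

/-- The prescribed label of `X ⊔ Y`, with the same conventions as `meetLabel`. -/
def joinLabel (s : Sign) : Option Λ → Option Λ → Option Λ :=
  Option.map₂ fun a b => if s = .pos then a ⊔ b else a ⊓ b

theorem meetLabel_eq_none_iff {s : Sign} {a b : Option Λ} :
    meetLabel s a b = none ↔ a = none ∧ b = none := by
  cases a <;> cases b <;> simp [meetLabel]

theorem joinLabel_eq_none_iff {s : Sign} {a b : Option Λ} :
    joinLabel s a b = none ↔ a = none ∨ b = none := by
  cases a <;> cases b <;> simp [joinLabel]

end Labels

/-- The type synonym of `Option Λ` carrying the order relevant at words of variance `s`: that of `Λ`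
or its dual, with `none` as a top element in both cases. -/
def SignedLabel (Λ : Type*) (_s : Sign) : Type _ :=
  Option Λ

namespace SignedLabel

variable {Λ : Type*}

/-- The identity map onto the type synonym. -/
def of (s : Sign) (a : Option Λ) : SignedLabel Λ s :=
  a

variable [Lattice Λ]

instance : (s : Sign) → Lattice (SignedLabel Λ s)
  | .pos => inferInstanceAs (Lattice (WithTop Λ))
  | .neg => inferInstanceAs (Lattice (WithTop Λᵒᵈ))

theorem of_inf_of (s : Sign) (a b : Option Λ) : of s a ⊓ of s b = of s (meetLabel s a b) := by
  cases s <;> cases a <;> cases b <;> rfl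

theorem of_sup_of (s : Sign) (a b : Option Λ) : of s a ⊔ of s b = of s (joinLabel s a b) := by
  cases s <;> cases a <;> cases b <;> rfl

theorem of_le_of_iff {s : Sign} {a b : Option Λ} : of s a ≤ of s b ↔ meetLabel s a b = a := by
  rw [← inf_eq_left, of_inf_of]
  rfl

theorem of_le_of_none (s : Sign) (a : Option Λ) : of s a ≤ of s none :=
  of_le_of_iff.2 (by cases a <;> rfl)

theorem of_some_le_of_some_top [OrderTop Λ] (a : Λ) : of .pos (some a) ≤ of .pos (some ⊤) :=
  of_le_of_iff.2 (by simp [meetLabel])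

theorem of_some_bot_or_top_le [BoundedOrder Λ] (s : Sign) (a : Option Λ) :
    of s (some (if s = .pos then ⊥ else ⊤)) ≤ of s a :=
  of_le_of_iff.2 (by cases s <;> cases a <;> simp [meetLabel])

end SignedLabel

/-- The intrinsic description of the markings of sketches: regular `Λ`-labeled trees, encoded as
partial functions on words. -/
structure IsRegularTree {L Λ : Type*} (f : List L → Option Λ) : Prop where
  root : f [] ≠ none
  append_eq_none : ∀ {u : List L} (v : List L), f u = none → f (u ++ v) = none
  finite : HasFiniteLeftQuotients f

/-- The nonempty subtrees of a tree, the states of its minimal automaton. -/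
abbrev Subtree {L Λ : Type*} (f : List L → Option Λ) : Type _ :=
  {g // g ∈ Set.range (leftQuotient f) ∧ g [] ≠ none}

namespace Subtree

variable {L Λ : Type*} {f : List L → Option Λ}

/-- The transition from a subtree to its child along an edge. -/
def step (g : Subtree f) (x : L) : Option (Subtree f) :=
  if hx : g.1 [x] = none then none
  else some ⟨leftQuotient g.1 [x], g.2.1.imp' (· ++ [x]) fun u hu => by
    rw [← hu, leftQuotient_leftQuotient], hx⟩

/-- The label of the root of a subtree. -/
def label (g : Subtree f) : Λ :=
  (g.1 []).get (Option.isSome_iff_ne_none.2 g.2.2)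

theorem append_eq_none (hf : IsRegularTree f) (g : Subtree f) {v : List L} (w : List L)
    (hv : g.1 v = none) : g.1 (v ++ w) = none := by
  obtain ⟨_, ⟨u, rfl⟩, _⟩ := g
  exact (congrFun (leftQuotient_leftQuotient f u v) w).trans (hf.append_eq_none w hv)

theorem map_label_foldlM_step (hf : IsRegularTree f) (w : List L) (g : Subtree f) :
    (List.foldlM step g w).map label = g.1 w := by
  induction w generalizing g with
  | nil => exact Option.some_get _
  | cons x w ih =>
    rw [List.foldlM_cons, step]
    split_ifs with hx
    · exact (append_eq_none hf g w hx).symm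
    · exact ih _

end Subtree

namespace IsRegularTree

section Sketch

variable {L Λ : Type} {f : List L → Option Λ}

/-- The minimal automaton of a regular tree. -/
def toSketch (hf : IsRegularTree f) : Sketch L Λ where
  State := Subtree f
  finite := (hf.finite.subset fun _ hg => hg.1).to_subtype
  init := ⟨f, ⟨[], rfl⟩, hf.root⟩
  step := Subtree.step
  lab := Subtree.label

theorem node_toSketch (hf : IsRegularTree f) : hf.toSketch.node = f :=
  funext fun w => Subtree.map_label_foldlM_step hf w hf.toSketch.init

end Sketch

variable {L : Type} {Λ : Type*} {f g : List L → Option Λ}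

theorem meet [Lattice Λ] (sgn : L → Sign) (hf : IsRegularTree f) (hg : IsRegularTree g) :
    IsRegularTree fun w => meetLabel (wordSign sgn w) (f w) (g w) where
  root h := hf.root (meetLabel_eq_none_iff.1 h).1
  append_eq_none v h :=
    meetLabel_eq_none_iff.2 <|
      (meetLabel_eq_none_iff.1 h).imp (hf.append_eq_none v) (hg.append_eq_none v)
  finite := ((hasFiniteLeftQuotients_wordSign sgn).map₂ meetLabel hf.finite).map₂ id hg.finite

theorem join [Lattice Λ] (sgn : L → Sign) (hf : IsRegularTree f) (hg : IsRegularTree g) :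
    IsRegularTree fun w => joinLabel (wordSign sgn w) (f w) (g w) where
  root h := (joinLabel_eq_none_iff.1 h).elim hf.root hg.root
  append_eq_none v h :=
    joinLabel_eq_none_iff.2 <|
      (joinLabel_eq_none_iff.1 h).imp (hf.append_eq_none v) (hg.append_eq_none v)
  finite := ((hasFiniteLeftQuotients_wordSign sgn).map₂ joinLabel hf.finite).map₂ id hg.finite

end IsRegularTree

namespace Sketch

variable {L Λ : Type}

theorem isRegularTree_node (X : Sketch L Λ) : IsRegularTree X.node where
  root := Option.some_ne_none _
  append_eq_none {u} v hu := by
    have hrun : List.foldlM X.step X.init u = none := Option.map_eq_none_iff.1 hu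
    simp [node, run, List.foldlM_append, hrun]
  finite :=
    haveI := X.finite
    .of_factor X.run (fun p v => (p.bind (List.foldlM X.step · v)).map X.lab) fun u v =>
      congrArg (Option.map X.lab) List.foldlM_append

/-- The marking of a sketch as an element of the product, over all words, of the lattices of
optional labels. -/
def marking (sgn : L → Sign) (X : Sketch L Λ) (w : List L) : SignedLabel Λ (wordSign sgn w) :=
  .of _ (X.node w)

theorem equiv_iff_marking_eq (sgn : L → Sign) {X Y : Sketch L Λ} :
    X.Equiv Y ↔ X.marking sgn = Y.marking sgn :=
  funext_iff.symm

section Lattice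

variable [Lattice Λ] (sgn : L → Sign) (X Y : Sketch L Λ)

/-- The meet `X ⊓ Y` of sketches. -/
def meet : Sketch L Λ :=
  (X.isRegularTree_node.meet sgn Y.isRegularTree_node).toSketch

/-- The join `X ⊔ Y` of sketches. -/
def join : Sketch L Λ :=
  (X.isRegularTree_node.join sgn Y.isRegularTree_node).toSketch

theorem node_meet (w : List L) :
    (meet sgn X Y).node w = meetLabel (wordSign sgn w) (X.node w) (Y.node w) :=
  congrFun (IsRegularTree.node_toSketch _) w

theorem node_join (w : List L) :
    (join sgn X Y).node w = joinLabel (wordSign sgn w) (X.node w) (Y.node w) :=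
  congrFun (IsRegularTree.node_toSketch _) w

theorem marking_meet : (meet sgn X Y).marking sgn = X.marking sgn ⊓ Y.marking sgn := by
  funext w
  rw [marking, node_meet, ← SignedLabel.of_inf_of]
  rfl

theorem marking_join : (join sgn X Y).marking sgn = X.marking sgn ⊔ Y.marking sgn := by
  funext w
  rw [marking, node_join, ← SignedLabel.of_sup_of]
  rfl

end Lattice

/-- The sketch with language `{ε}` and node label `a`. -/
def single (a : Λ) : Sketch L Λ where
  State := Unit
  finite := inferInstance
  init := ()
  step _ _ := none
  lab _ := a

theorem node_single (a : Λ) (w : List L) :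
    (single a).node w = if w = [] then some a else none := by
  cases w with
  | nil => exact (if_pos rfl).symm
  | cons x w => exact (if_neg (List.cons_ne_nil x w)).symm

theorem marking_le_marking_single_top [Lattice Λ] [OrderTop Λ] (sgn : L → Sign) (X : Sketch L Λ) :
    X.marking sgn ≤ (single ⊤).marking sgn
  | [] => SignedLabel.of_some_le_of_some_top _
  | _ :: _ => SignedLabel.of_le_of_none _ _

/-- The sketch with language `Σ*` whose labels depend only on the variance of the word. -/
def ofSign (sgn : L → Sign) (label : Sign → Λ) : Sketch L Λ where
  State := Sign
  finite := inferInstance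
  init := .pos
  step s x := some (s.mul (sgn x))
  lab := label

theorem node_ofSign (sgn : L → Sign) (label : Sign → Λ) (w : List L) :
    (ofSign sgn label).node w = some (label (wordSign sgn w)) := by
  suffices h : ∀ s, List.foldlM (ofSign sgn label).step s w = some (s.mul (wordSign sgn w)) from
    congrArg (Option.map label) (h .pos)
  induction w with
  | nil => exact fun s => congrArg some s.mul_pos.symm
  | cons x w ih => exact fun s => (ih _).trans (congrArg some (s.mul_assoc _ _))

theorem marking_ofSign_bot_top_le [Lattice Λ] [BoundedOrder Λ] (sgn : L → Sign) (X : Sketch L Λ) :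
    (ofSign sgn fun s => if s = .pos then ⊥ else ⊤).marking sgn ≤ X.marking sgn := fun w => by
  rw [marking, node_ofSign]
  exact SignedLabel.of_some_bot_or_top_le _ _

end Sketch

open Sketch

theorem sketches_form_lattice_general {L Λ : Type} [Lattice Λ] [BoundedOrder Λ]
    (sgn : L → Sign) :
    ∃ inf sup : Sketch L Λ → Sketch L Λ → Sketch L Λ,
      (∀ X Y : Sketch L Λ, ∀ w : List L,
        (inf X Y).node w = meetLabel (wordSign sgn w) (X.node w) (Y.node w)) ∧
      (∀ X Y : Sketch L Λ, ∀ w : List L,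
        (sup X Y).node w = joinLabel (wordSign sgn w) (X.node w) (Y.node w)) ∧
      (∀ X Y, (inf X Y).Equiv (inf Y X)) ∧
      (∀ X Y Z, (inf (inf X Y) Z).Equiv (inf X (inf Y Z))) ∧
      (∀ X Y, (sup X Y).Equiv (sup Y X)) ∧
      (∀ X Y Z, (sup (sup X Y) Z).Equiv (sup X (sup Y Z))) ∧
      (∀ X Y, (inf X (sup X Y)).Equiv X) ∧
      (∀ X Y, (sup X (inf X Y)).Equiv X) ∧
      (∀ X Y, (inf X Y).Equiv X ↔ (sup X Y).Equiv Y) ∧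
      (∃ T : Sketch L Λ,
        (∀ w : List L, T.node w = if w = [] then some ⊤ else none) ∧
        ∀ X, (inf X T).Equiv X) ∧
      (∃ B : Sketch L Λ,
        (∀ w : List L,
          B.node w = some (if wordSign sgn w = .pos then ⊥ else ⊤)) ∧
        ∀ X, (inf B X).Equiv B) := by
  refine ⟨meet sgn, join sgn, node_meet sgn, node_join sgn, ?_⟩
  simp only [equiv_iff_marking_eq sgn, marking_meet, marking_join]
  exact ⟨fun _ _ => inf_comm _ _, fun _ _ _ => inf_assoc _ _ _,
    fun _ _ => sup_comm _ _, fun _ _ _ => sup_assoc _ _ _,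
    fun _ _ => inf_sup_self, fun _ _ => sup_inf_self,
    fun _ _ => inf_eq_left.trans sup_eq_right.symm,
    ⟨single ⊤, node_single ⊤,
      fun X => inf_eq_left.2 (marking_le_marking_single_top sgn X)⟩,
    ⟨ofSign sgn fun s => if s = .pos then ⊥ else ⊤, node_ofSign sgn _,
      fun X => inf_eq_left.2 (marking_ofSign_bot_top_le sgn X)⟩⟩

/-- the set of sketches over `(Σ, ⟨·⟩, Λ)` (with `Σ` finite and
`Λ` a bounded lattice) forms a lattice.  There are well-defined meet `⊓` and
join `⊔` operations on sketches whose languages and node markings are given by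
the prescribed formulas (`ℒ(X ⊓ Y) = ℒ(X) ∪ ℒ(Y)`, `ℒ(X ⊔ Y) = ℒ(X) ∩ ℒ(Y)`,
with node labels combined by `∧`/`∨` according to the variance of the word,
and inherited from the unique side on language differences for `⊓`).  These
operations satisfy the lattice axioms (commutativity, associativity and the
absorption laws, hence idempotency) up to equality of sketches, for the order
`X ⊴ Y` defined by `X ⊓ Y = X`.  Moreover there is a top element: the sketch
with language `{ε}` whose single node is labeled `⊤ ∈ Λ`; and (as `Σ` is
finite) a bottom element: the sketch with language `Σ*` and labeling
`ν(w) = ⊥` when `⟨w⟩ = ⊕` and `ν(w) = ⊤` when `⟨w⟩ = ⊖`. -/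
theorem sketches_form_lattice {L Λ : Type} [Finite L] [Lattice Λ]
    [BoundedOrder Λ] (sgn : L → Sign) :
    ∃ inf sup : Sketch L Λ → Sketch L Λ → Sketch L Λ,
      -- the meet has the prescribed language and node markings
      (∀ X Y : Sketch L Λ, ∀ w : List L,
        (inf X Y).node w =
          match X.node w, Y.node w with
          | some a, some b =>
              some (if wordSign sgn w = .pos then a ⊓ b else a ⊔ b)
          | some a, none => some a
          | none, some b => some b
          | none, none => none) ∧
      -- the join has the prescribed language and node markings
      (∀ X Y : Sketch L Λ, ∀ w : List L,
        (sup X Y).node w =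
          match X.node w, Y.node w with
          | some a, some b =>
              some (if wordSign sgn w = .pos then a ⊔ b else a ⊓ b)
          | _, _ => none) ∧
      -- lattice axioms, up to equality of sketches
      (∀ X Y, (inf X Y).Equiv (inf Y X)) ∧
      (∀ X Y Z, (inf (inf X Y) Z).Equiv (inf X (inf Y Z))) ∧
      (∀ X Y, (sup X Y).Equiv (sup Y X)) ∧
      (∀ X Y Z, (sup (sup X Y) Z).Equiv (sup X (sup Y Z))) ∧
      (∀ X Y, (inf X (sup X Y)).Equiv X) ∧
      (∀ X Y, (sup X (inf X Y)).Equiv X) ∧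
      -- the order X ⊴ Y given by X ⊓ Y = X is equivalently sup-absorption
      (∀ X Y, (inf X Y).Equiv X ↔ (sup X Y).Equiv Y) ∧
      -- top element: language {ε}, single node labeled ⊤
      (∃ T : Sketch L Λ,
        (∀ w : List L, T.node w = if w = [] then some ⊤ else none) ∧
        ∀ X, (inf X T).Equiv X) ∧
      -- bottom element: language Σ*, labeled ⊥ on covariant words, ⊤ on
      -- contravariant words
      (∃ B : Sketch L Λ,
        (∀ w : List L,
          B.node w = some (if wordSign sgn w = .pos then ⊥ else ⊤)) ∧
        ∀ X, (inf B X).Equiv B) := by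
  obtain ⟨inf, sup, hinf, hsup, h⟩ := sketches_form_lattice_general (Λ := Λ) sgn
  refine ⟨inf, sup, fun X Y w => (hinf X Y w).trans ?_, fun X Y w => (hsup X Y w).trans ?_, h⟩ <;>
    cases X.node w <;> cases Y.node w <;> rfl
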